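/- arXiv:2303.13964 — 3 statements merged into one kernel-verified Lean document; each statement's English description precedes it below -/
import Mathlib

section
/- Fix a differentiable nonlinearity φ, a differentiable loss ℓ, two disjoint labelled node sets V_tr and V_out with labels (Y_obs)_u, and define F_in(W,A) = (1/|V_tr|) Σ_{u∈V_tr} ℓ((Y_W(X,A))_u, (Y_obs)_u). Let W_t(A) be obtained by t steps of a gradient-based iteration W_{s+1}(A) = W_s(A) − Q_s(W_s(A), ∇_W F_in(W_s(A), A)) from an initialization W_0 independent of A, and define the outer objective F_out(A) = (1/|V_out|) Σ_{u∈V_out} ℓ((Y_{W_t(A)}(X,A))_u, (Y_obs)_u). Let G be a graph on the n nodes, and let A and A' both be supported on G, agreeing on every entry except possibly the entry (i,j), where nodes i and j both satisfy dist_G(i,v) ≥ k and dist_G(j,v) ≥ k for every v ∈ V_tr ∪ V_out. Then F_out(A) = F_out(A'); in particular the hypergradient ∂F_out/∂A_{ij} is zero. -/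
/-!
STATEMENT 2: the bilevel outer objective `F_out`, evaluated at GCN weights obtained
by `t` gradient-based inner iterations, does not depend on the entry `A i j` when
`i` and `j` are at least `k` hops from every labelled node in `V_tr ∪ V_out`;
in particular the hypergradient on such an edge is zero.
-/

open scoped BigOperators

attribute [local instance] Matrix.normedAddCommGroup Matrix.normedSpace

/-- The output `X^[k]` of the first `k` layers of a message-passing GCN:
`X^[0] = X`, `X^[l+1] = φ (X^[l] * W1 l + A * X^[l] * W2 l + 1ₙ (b l)ᵀ)`. -/
noncomputable def gcnForward {n : ℕ} (φ : ℝ → ℝ) (d : ℕ → ℕ)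
    (W1 W2 : ∀ l : ℕ, Matrix (Fin (d l)) (Fin (d (l + 1))) ℝ)
    (b : ∀ l : ℕ, Fin (d (l + 1)) → ℝ)
    (A : Matrix (Fin n) (Fin n) ℝ) (X : Matrix (Fin n) (Fin (d 0)) ℝ) :
    ∀ k : ℕ, Matrix (Fin n) (Fin (d k)) ℝ
  | 0 => X
  | (k + 1) => Matrix.of fun u c =>
      φ ((gcnForward φ d W1 W2 b A X k * W1 k) u c
        + (A * gcnForward φ d W1 W2 b A X k * W2 k) u c + b k c)

/-- The parameters `W = {W1^[l], W2^[l], b^[l]}_{l=1}^k` of a `k`-layer GCN,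
regarded as a point of a finite-dimensional real normed vector space. -/
abbrev GCNParams (d : ℕ → ℕ) (k : ℕ) : Type :=
  ∀ l : Fin k,
    Matrix (Fin (d l)) (Fin (d (l + 1))) ℝ ×
      Matrix (Fin (d l)) (Fin (d (l + 1))) ℝ × (Fin (d (l + 1)) → ℝ)

/-- First weight matrices, extended by junk above layer `k`. -/
noncomputable def pW1 {d : ℕ → ℕ} {k : ℕ} (W : GCNParams d k) :
    ∀ l : ℕ, Matrix (Fin (d l)) (Fin (d (l + 1))) ℝ :=
  fun l => if h : l < k then (W ⟨l, h⟩).1 else 0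

/-- Second weight matrices, extended by junk above layer `k`. -/
noncomputable def pW2 {d : ℕ → ℕ} {k : ℕ} (W : GCNParams d k) :
    ∀ l : ℕ, Matrix (Fin (d l)) (Fin (d (l + 1))) ℝ :=
  fun l => if h : l < k then (W ⟨l, h⟩).2.1 else 0

/-- Biases, extended by junk above layer `k`. -/
noncomputable def pB {d : ℕ → ℕ} {k : ℕ} (W : GCNParams d k) :
    ∀ l : ℕ, Fin (d (l + 1)) → ℝ :=
  fun l => if h : l < k then (W ⟨l, h⟩).2.2 else 0

/-- The inner objective
`F_in (W, A) = (1/|V_tr|) ∑_{u ∈ V_tr} ℓ ((Y_W (X, A))_u, (Y_obs)_u)`. -/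
noncomputable def Finner {n : ℕ} (φ : ℝ → ℝ) (d : ℕ → ℕ) (k : ℕ)
    (ℓ : (Fin (d k) → ℝ) → ℝ → ℝ) (X : Matrix (Fin n) (Fin (d 0)) ℝ)
    (Yobs : Fin n → ℝ) (Vtr : Finset (Fin n))
    (W : GCNParams d k) (A : Matrix (Fin n) (Fin n) ℝ) : ℝ :=
  (Vtr.card : ℝ)⁻¹ *
    ∑ u ∈ Vtr, ℓ (fun c => gcnForward φ d (pW1 W) (pW2 W) (pB W) A X k u c) (Yobs u)

/-- The outer objective
`F_out (A) = (1/|V_out|) ∑_{u ∈ V_out} ℓ ((Y_{W_t(A)} (X, A))_u, (Y_obs)_u)`,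
for given trained weights `W`. -/
noncomputable def Fouter {n : ℕ} (φ : ℝ → ℝ) (d : ℕ → ℕ) (k : ℕ)
    (ℓ : (Fin (d k) → ℝ) → ℝ → ℝ) (X : Matrix (Fin n) (Fin (d 0)) ℝ)
    (Yobs : Fin n → ℝ) (Vout : Finset (Fin n))
    (W : GCNParams d k) (A : Matrix (Fin n) (Fin n) ℝ) : ℝ :=
  (Vout.card : ℝ)⁻¹ *
    ∑ u ∈ Vout, ℓ (fun c => gcnForward φ d (pW1 W) (pW2 W) (pB W) A X k u c) (Yobs u)

/-!
After `l` layers the output at a node `v` reads only the rows of `A` at nodes closer to `v` than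
`l`, because every layer reads the row of the node itself and otherwise passes along edges. So a
change of `A` in rows at distance at least `k` from `V_tr` leaves `F_in` unchanged as a function of
the weights. Training sees `A` only through this function and therefore follows the same trajectory,
and if those rows are also at distance at least `k` from `V_out`, then `F_out` is unchanged too.
-/

/-- `A` is a weighted adjacency matrix supported on `G`: off the diagonal, its entries vanish at
non-edges. Self-loops may carry any weight. -/
def IsSupportedOn {V R : Type*} [Zero R] (A : Matrix V V R) (G : SimpleGraph V) : Prop :=
  ∀ s t, s ≠ t → ¬ G.Adj s t → A s t = 0

theorem IsSupportedOn.edist_le_one {V R : Type*} [Zero R] {A : Matrix V V R} {G : SimpleGraph V}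
    (hA : IsSupportedOn A G) {s t : V} (hst : A s t ≠ 0) : G.edist s t ≤ 1 := by
  rw [SimpleGraph.edist_le_one_iff_adj_or_eq]
  by_contra! h
  exact hst (hA s t h.2 h.1)

theorem mul_row_congr {m n o R : Type*} [Fintype n] [NonUnitalNonAssocSemiring R]
    {A B : Matrix m n R} {M N : Matrix n o R} {u : m} (hAB : A u = B u)
    (hMN : ∀ w, A u w ≠ 0 → M w = N w) : (A * M) u = (B * N) u := by
  ext c
  simp only [Matrix.mul_apply, ← hAB]
  refine Finset.sum_congr rfl fun w _ => ?_
  by_cases hw : A u w = 0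
  · simp only [hw, zero_mul]
  · rw [hMN w hw]

theorem eq_of_recurrence {α : Type*} {f : ℕ → α → α} {x y : ℕ → α} (h0 : x 0 = y 0)
    (hx : ∀ s, x (s + 1) = f s (x s)) (hy : ∀ s, y (s + 1) = f s (y s)) (t : ℕ) : x t = y t := by
  induction t with
  | zero => exact h0
  | succ s ih => rw [hx, hy, ih]

section ReceptiveField

variable {n : ℕ} {φ : ℝ → ℝ} {d : ℕ → ℕ} {X : Matrix (Fin n) (Fin (d 0)) ℝ}
  {G : SimpleGraph (Fin n)} {A B : Matrix (Fin n) (Fin n) ℝ}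

theorem gcnForward_succ_row_congr {W1 W2 : ∀ l : ℕ, Matrix (Fin (d l)) (Fin (d (l + 1))) ℝ}
    {b : ∀ l : ℕ, Fin (d (l + 1)) → ℝ} {l : ℕ} {v : Fin n} (hA : IsSupportedOn A G)
    (hrow : A v = B v)
    (hprev : ∀ w, G.edist w v ≤ 1 →
      gcnForward φ d W1 W2 b A X l w = gcnForward φ d W1 W2 b B X l w) :
    gcnForward φ d W1 W2 b A X (l + 1) v = gcnForward φ d W1 W2 b B X (l + 1) v := by
  have hself : gcnForward φ d W1 W2 b A X l v = gcnForward φ d W1 W2 b B X l v :=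
    hprev v (SimpleGraph.edist_self.trans_le zero_le_one)
  have haggregate : (A * gcnForward φ d W1 W2 b A X l) v = (B * gcnForward φ d W1 W2 b B X l) v :=
    mul_row_congr hrow fun w hw => hprev w (SimpleGraph.edist_comm.trans_le (hA.edist_le_one hw))
  ext c
  simp only [gcnForward, Matrix.of_apply, Matrix.mul_apply_eq_vecMul _ (W1 l),
    Matrix.mul_apply_eq_vecMul _ (W2 l), hself, haggregate]

theorem gcnForward_row_congr {W1 W2 : ∀ l : ℕ, Matrix (Fin (d l)) (Fin (d (l + 1))) ℝ}
    {b : ∀ l : ℕ, Fin (d (l + 1)) → ℝ} {l : ℕ} {v : Fin n} (hA : IsSupportedOn A G)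
    (hAB : ∀ w, G.edist w v < l → A w = B w) :
    gcnForward φ d W1 W2 b A X l v = gcnForward φ d W1 W2 b B X l v := by
  induction l generalizing v with
  | zero => rfl
  | succ l ih =>
    refine gcnForward_succ_row_congr hA (hAB v (by simp)) fun w hwv => ih fun x hxw => hAB x ?_
    calc G.edist x v ≤ G.edist x w + G.edist w v := G.edist_triangle
      _ ≤ G.edist x w + 1 := by gcongr
      _ < l + 1 := (ENat.add_lt_add_iff_right ENat.one_ne_top).2 hxw
      _ = (l + 1 : ℕ) := by push_cast; rfl

variable {k : ℕ} {ℓ : (Fin (d k) → ℝ) → ℝ → ℝ} {Yobs : Fin n → ℝ} {S : Finset (Fin n)}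

theorem Finner_congr (hA : IsSupportedOn A G)
    (hAB : ∀ v ∈ S, ∀ w, G.edist w v < k → A w = B w) (W : GCNParams d k) :
    Finner φ d k ℓ X Yobs S W A = Finner φ d k ℓ X Yobs S W B := by
  unfold Finner
  congr 1
  exact Finset.sum_congr rfl fun v hv =>
    congrArg (ℓ · (Yobs v)) (gcnForward_row_congr hA (hAB v hv))

theorem Fouter_congr (hA : IsSupportedOn A G)
    (hAB : ∀ v ∈ S, ∀ w, G.edist w v < k → A w = B w) (W : GCNParams d k) :
    Fouter φ d k ℓ X Yobs S W A = Fouter φ d k ℓ X Yobs S W B :=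
  -- `Fouter` and `Finner` are the same average, taken over different node sets.
  Finner_congr hA hAB W

end ReceptiveField

theorem gcn_bilevel_hypergradient_scarcity_general
    {n : ℕ} (φ : ℝ → ℝ) (d : ℕ → ℕ) (k : ℕ) (ℓ : (Fin (d k) → ℝ) → ℝ → ℝ)
    (X : Matrix (Fin n) (Fin (d 0)) ℝ) (Yobs : Fin n → ℝ) (Vtr Vout : Finset (Fin n))
    (G : SimpleGraph (Fin n)) (A : Matrix (Fin n) (Fin n) ℝ) (hA : IsSupportedOn A G)
    (step : ℕ → GCNParams d k → (GCNParams d k → ℝ) → GCNParams d k) (W0 : GCNParams d k)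
    (Wseq : Matrix (Fin n) (Fin n) ℝ → ℕ → GCNParams d k) (hW0 : ∀ B, Wseq B 0 = W0)
    (hWstep : ∀ B s, Wseq B (s + 1) =
      step s (Wseq B s) fun W => Finner φ d k ℓ X Yobs Vtr W B)
    (t : ℕ) :
    (∀ B, (∀ v ∈ Vtr ∪ Vout, ∀ w, G.edist w v < k → A w = B w) →
      Fouter φ d k ℓ X Yobs Vout (Wseq A t) A = Fouter φ d k ℓ X Yobs Vout (Wseq B t) B) ∧
    ∀ i, (∀ v ∈ Vtr ∪ Vout, (k : ℕ∞) ≤ G.edist i v) → ∀ j θ₀, HasDerivAt (fun θ : ℝ =>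
        Fouter φ d k ℓ X Yobs Vout
          (Wseq (Matrix.of fun s t' => if s = i ∧ t' = j then θ else A s t') t)
          (Matrix.of fun s t' => if s = i ∧ t' = j then θ else A s t'))
      0 θ₀ := by
  have houter : ∀ B, (∀ v ∈ Vtr ∪ Vout, ∀ w, G.edist w v < k → A w = B w) →
      Fouter φ d k ℓ X Yobs Vout (Wseq A t) A = Fouter φ d k ℓ X Yobs Vout (Wseq B t) B := by
    intro B hAB
    have hinner : (fun W => Finner φ d k ℓ X Yobs Vtr W A) =
        fun W => Finner φ d k ℓ X Yobs Vtr W B :=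
      funext <| Finner_congr hA fun v hv => hAB v (Finset.mem_union_left _ hv)
    have htrained : Wseq A t = Wseq B t :=
      eq_of_recurrence (f := fun s W => step s W fun W' => Finner φ d k ℓ X Yobs Vtr W' A)
        ((hW0 A).trans (hW0 B).symm) (hWstep A) (hinner ▸ hWstep B) t
    rw [htrained]
    exact Fouter_congr hA (fun v hv => hAB v (Finset.mem_union_right _ hv)) _
  refine ⟨houter, fun i hi j θ₀ => ?_⟩
  refine (hasDerivAt_const θ₀ (Fouter φ d k ℓ X Yobs Vout (Wseq A t) A)).congr_of_eventuallyEq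
    (.of_forall fun θ => (houter _ fun v hv w hw => ?_).symm)
  have hwi : w ≠ i := by
    rintro rfl
    exact (hi v hv).not_gt hw
  ext c
  simp [hwi]

/-- hypergradient scarcity for GCNs, bilevel setting.
Let `W_t(A)` be inner gradient-based iterates for `F_in` from an initialization
independent of `A`, and let `F_out (A)` penalize the classification error of
`Y_{W_t(A)}(X, A)` on `V_out`, disjoint from `V_tr`.  If `A, A'` are supported
on `G`, agree except possibly at the entry `(i,j)`, and `i, j` are at least `k`
hops from every node of `V_tr ∪ V_out`, then `F_out (A) = F_out (A')`; in
particular the hypergradient `∂F_out/∂A_{ij}` is zero. -/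
theorem gcn_bilevel_hypergradient_scarcity
    {n : ℕ} (φ : ℝ → ℝ) (hφ : Differentiable ℝ φ) (d : ℕ → ℕ) (k : ℕ)
    (ℓ : (Fin (d k) → ℝ) → ℝ → ℝ)
    (hℓ : Differentiable ℝ fun p : (Fin (d k) → ℝ) × ℝ => ℓ p.1 p.2)
    (X : Matrix (Fin n) (Fin (d 0)) ℝ)
    (Yobs : Fin n → ℝ) (Vtr Vout : Finset (Fin n))
    (hdisj : Disjoint Vtr Vout)
    (G : SimpleGraph (Fin n))
    (A A' : Matrix (Fin n) (Fin n) ℝ)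
    (hA : ∀ s t, s ≠ t → ¬ G.Adj s t → A s t = 0)
    (hA' : ∀ s t, s ≠ t → ¬ G.Adj s t → A' s t = 0)
    (i j : Fin n)
    (hagree : ∀ s t, ¬ (s = i ∧ t = j) → A s t = A' s t)
    (hi : ∀ v ∈ Vtr ∪ Vout, (k : ℕ∞) ≤ G.edist i v)
    (hj : ∀ v ∈ Vtr ∪ Vout, (k : ℕ∞) ≤ G.edist j v)
    (Q : ℕ → GCNParams d k → (GCNParams d k →L[ℝ] ℝ) → GCNParams d k)
    (W0 : GCNParams d k)
    (Wseq : Matrix (Fin n) (Fin n) ℝ → ℕ → GCNParams d k)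
    (hW0 : ∀ B, Wseq B 0 = W0)
    (hWstep : ∀ B s, Wseq B (s + 1) =
      Wseq B s - Q s (Wseq B s)
        (fderiv ℝ (fun W => Finner φ d k ℓ X Yobs Vtr W B) (Wseq B s)))
    (t : ℕ) :
    Fouter φ d k ℓ X Yobs Vout (Wseq A t) A =
      Fouter φ d k ℓ X Yobs Vout (Wseq A' t) A' ∧
    deriv (fun θ : ℝ =>
        Fouter φ d k ℓ X Yobs Vout
          (Wseq (Matrix.of fun s t' => if s = i ∧ t' = j then θ else A s t') t)
          (Matrix.of fun s t' => if s = i ∧ t' = j then θ else A s t'))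
      (A i j) = 0 := by
  obtain ⟨houter, hderiv⟩ := gcn_bilevel_hypergradient_scarcity_general φ d k ℓ X Yobs Vtr Vout G A
    hA (fun s W F => W - Q s W (fderiv ℝ F W)) W0 Wseq hW0 hWstep t
  exact ⟨houter A' fun v hv w hw => funext fun c => hagree w c fun h =>
    (hi v hv).not_gt (h.1 ▸ hw), (hderiv i hi j _).deriv⟩
end

section
/- Assume G is connected, let Y_obs ∈ ℝ^n, y_∞ = ‖Y_obs‖_∞, let μ_min ≤ μ_max be the smallest and largest eigenvalues of B, ν = 1 − μ_min/μ_max, B̃ = B/μ_max, and T_r = (I − B̃)^r μ_max^{-1} S̃_in Y_obs. Then for every r ≥ 0, the Euclidean norm satisfies ‖T_r‖ ≤ ν^r y_∞ / (μ_max √|V_tr|). -/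
/-! STATEMENT 9: the Neumann series terms satisfy
`‖T_r‖ ≤ ν^r y_∞ / (μmax √|V_tr|)` in Euclidean norm, with `ν = 1 - μmin/μmax`. -/

open scoped BigOperators Matrix

/-- The (weighted) graph Laplacian `L = D - A` with degree matrix `D = diag (A 1ₙ)`. -/
noncomputable def lapMat {n : ℕ} (A : Matrix (Fin n) (Fin n) ℝ) :
    Matrix (Fin n) (Fin n) ℝ :=
  Matrix.diagonal (fun u => ∑ v, A u v) - A

/-- The diagonal 0/1 selection matrix of a set `V` of nodes. -/
noncomputable def selMat {n : ℕ} (V : Finset (Fin n)) : Matrix (Fin n) (Fin n) ℝ :=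
  Matrix.diagonal (fun u => if u ∈ V then 1 else 0)

/-- `S̃_in = S_in / |V_tr|`. -/
noncomputable def Stin {n : ℕ} (Vtr : Finset (Fin n)) : Matrix (Fin n) (Fin n) ℝ :=
  (Vtr.card : ℝ)⁻¹ • selMat Vtr

/-- `B = S̃_in + λ L̃` where `L̃ = L/m`. -/
noncomputable def Bmat {n : ℕ} (Vtr : Finset (Fin n)) (lam : ℝ) (m : ℕ)
    (A : Matrix (Fin n) (Fin n) ℝ) : Matrix (Fin n) (Fin n) ℝ :=
  Stin Vtr + (lam / m) • lapMat A

/-- `T_r = (I - B̃)^r μmax⁻¹ S̃_in Y_obs`, the `r`-th term of the Neumann series of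
`Y(A) = B⁻¹ S̃_in Y_obs`, where `B̃ = B/μmax`. -/
noncomputable def Tvec {n : ℕ} (Vtr : Finset (Fin n)) (lam : ℝ) (m : ℕ)
    (A : Matrix (Fin n) (Fin n) ℝ) (μmax : ℝ) (Yobs : Fin n → ℝ) (r : ℕ) :
    Fin n → ℝ :=
  ((1 - μmax⁻¹ • Bmat Vtr lam m A) ^ r).mulVec (μmax⁻¹ • (Stin Vtr).mulVec Yobs)

/-!
By the continuous functional calculus, if a self-adjoint `B` has spectrum in `[a, c]` with `0 < c`,
then `(I - B / c) ^ r` has operator norm `sup |1 - s / c| ^ r ≤ (1 - a / c) ^ r`. The Laplacian kills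
the all-ones vector, so `1ᵀ B 1 = 1ᵀ S̃_in 1 = 1 > 0`, which forces the upper end `c` of the spectrum
to be positive. Finally `S̃_in Y` has `|V_tr|` entries of size at most `‖Y‖_∞ / |V_tr|`, so its
Euclidean norm is at most `‖Y‖_∞ / √|V_tr|`.
-/

section Spectrum

variable {ι : Type*} [Fintype ι] [DecidableEq ι]

theorem mem_spectrum_iff_exists_mulVec_eq_smul {K : Type*} [Field K] {M : Matrix ι ι K} {μ : K} :
    μ ∈ spectrum K M ↔ ∃ x ≠ 0, M *ᵥ x = μ • x := by
  rw [← Matrix.spectrum_toLin', ← Module.End.hasEigenvalue_iff_mem_spectrum]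
  constructor
  · intro h
    obtain ⟨x, hx⟩ := h.exists_hasEigenvector
    exact ⟨x, hx.2, hx.apply_eq_smul⟩
  · rintro ⟨x, hx, hMx⟩
    exact Module.End.hasEigenvalue_of_hasEigenvector
      (Module.End.hasEigenvector_iff.2 ⟨Module.End.mem_eigenspace_iff.2 hMx, hx⟩)

theorem pos_of_spectrum_subset_Iic {B : Matrix ι ι ℝ} (hB : B.IsHermitian) {c : ℝ}
    (hc : spectrum ℝ B ⊆ Set.Iic c) {x : ι → ℝ} (hx : 0 < x ⬝ᵥ (B *ᵥ x)) : 0 < c := by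
  by_contra! hc0
  have hneg : (-B).PosSemidef := by
    refine Matrix.posSemidef_iff_isHermitian_and_spectrum_nonneg.2 ⟨hB.neg, fun s hs ↦ ?_⟩
    rw [← spectrum.neg_eq, Set.mem_neg] at hs
    exact neg_nonpos.1 ((hc hs).trans hc0)
  have hnonneg := hneg.dotProduct_mulVec_nonneg x
  rw [star_trivial, Matrix.neg_mulVec, dotProduct_neg] at hnonneg
  linarith

theorem norm_one_sub_inv_smul_pow_le {R : Type*} [NormedRing R] [StarRing R] [NormedAlgebra ℝ R]
    [IsometricContinuousFunctionalCalculus ℝ R IsSelfAdjoint] {b : R}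
    (hb : IsSelfAdjoint b) {a c : ℝ} (hc : 0 < c) (hac : a ≤ c)
    (hspec : spectrum ℝ b ⊆ Set.Icc a c) (r : ℕ) :
    ‖(1 - c⁻¹ • b) ^ r‖ ≤ (1 - a / c) ^ r := by
  have hcfc : (1 - c⁻¹ • b) ^ r = cfc (fun s : ℝ ↦ (1 - c⁻¹ * s) ^ r) b := by
    rw [cfc_pow (fun s : ℝ ↦ 1 - c⁻¹ * s) r b, cfc_sub (fun _ ↦ 1) (fun s ↦ c⁻¹ * s) b,
      cfc_const_one ℝ b, cfc_const_mul_id c⁻¹ b]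
  have hbound : ∀ s ∈ spectrum ℝ b, 0 ≤ 1 - c⁻¹ * s ∧ 1 - c⁻¹ * s ≤ 1 - a / c := by
    intro s hs
    obtain ⟨has, hsc⟩ := hspec hs
    rw [← div_eq_inv_mul, sub_nonneg, div_le_one hc]
    exact ⟨hsc, by gcongr⟩
  have hν : 0 ≤ 1 - a / c := sub_nonneg.2 ((div_le_one hc).2 hac)
  rw [hcfc]
  refine norm_cfc_le (pow_nonneg hν r) fun s hs ↦ ?_
  obtain ⟨h0, hle⟩ := hbound s hs
  rw [Real.norm_of_nonneg (pow_nonneg h0 r)]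
  exact pow_le_pow_left₀ h0 hle r

open scoped Matrix.Norms.L2Operator in
theorem norm_toLp_one_sub_inv_smul_pow_mulVec_le {B : Matrix ι ι ℝ} (hB : B.IsHermitian)
    {a c : ℝ} (hc : 0 < c) (hac : a ≤ c) (hspec : spectrum ℝ B ⊆ Set.Icc a c) (r : ℕ)
    (x : ι → ℝ) :
    ‖WithLp.toLp 2 ((1 - c⁻¹ • B) ^ r *ᵥ x)‖ ≤ (1 - a / c) ^ r * ‖WithLp.toLp 2 x‖ :=
  (Matrix.l2_opNorm_mulVec _ (WithLp.toLp 2 x)).trans <| by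
    gcongr
    exact norm_one_sub_inv_smul_pow_le hB.isSelfAdjoint hc hac hspec r

end Spectrum

section Graph

variable {n : ℕ}

theorem isSymm_lapMat {A : Matrix (Fin n) (Fin n) ℝ} (hA : A.IsSymm) : (lapMat A).IsSymm :=
  (Matrix.isSymm_diagonal _).sub hA

theorem lapMat_mulVec_one (A : Matrix (Fin n) (Fin n) ℝ) : lapMat A *ᵥ 1 = 0 := by
  ext u
  simp [lapMat, Matrix.mulVec, dotProduct, Matrix.diagonal_apply]

theorem isSymm_Stin (V : Finset (Fin n)) : (Stin V).IsSymm :=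
  (Matrix.isSymm_diagonal _).smul _

theorem one_dotProduct_Stin_mulVec_one {V : Finset (Fin n)} (hV : V.Nonempty) :
    (1 : Fin n → ℝ) ⬝ᵥ (Stin V *ᵥ 1) = 1 := by
  have hcard : (V.card : ℝ) ≠ 0 := Nat.cast_ne_zero.2 hV.card_ne_zero
  simp [Stin, selMat, Matrix.smul_mulVec, dotProduct, Matrix.mulVec_diagonal, hcard]

theorem norm_toLp_selMat_mulVec_le (V : Finset (Fin n)) (Y : Fin n → ℝ) :
    ‖WithLp.toLp 2 (selMat V *ᵥ Y)‖ ≤ √V.card * ‖Y‖ := by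
  rw [← sq_le_sq₀ (norm_nonneg _) (by positivity), mul_pow, Real.sq_sqrt V.card.cast_nonneg]
  calc ‖WithLp.toLp 2 (selMat V *ᵥ Y)‖ ^ 2 = ∑ u ∈ V, ‖Y u‖ ^ 2 := by
        simp [EuclideanSpace.norm_sq_eq, selMat, Matrix.mulVec_diagonal]
    _ ≤ ∑ _u ∈ V, ‖Y‖ ^ 2 := by
        gcongr with u
        exact norm_le_pi_norm Y u
    _ = V.card * ‖Y‖ ^ 2 := by rw [Finset.sum_const, nsmul_eq_mul]

theorem norm_toLp_Stin_mulVec_le (V : Finset (Fin n)) (Y : Fin n → ℝ) :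
    ‖WithLp.toLp 2 (Stin V *ᵥ Y)‖ ≤ ‖Y‖ / √V.card :=
  calc ‖WithLp.toLp 2 (Stin V *ᵥ Y)‖
      = (V.card : ℝ)⁻¹ * ‖WithLp.toLp 2 (selMat V *ᵥ Y)‖ := by
        rw [Stin, Matrix.smul_mulVec, WithLp.toLp_smul, norm_smul, norm_inv, Real.norm_natCast]
    _ ≤ (V.card : ℝ)⁻¹ * (√V.card * ‖Y‖) := by
        gcongr
        exact norm_toLp_selMat_mulVec_le V Y
    _ = ‖Y‖ / √V.card := by
        rw [← mul_assoc, ← div_eq_inv_mul, Real.sqrt_div_self, ← div_eq_inv_mul]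

theorem neumann_term_norm_bound_general {A : Matrix (Fin n) (Fin n) ℝ} (hA : A.IsSymm)
    {V : Finset (Fin n)} (hV : V.Nonempty) {t a c : ℝ}
    (hspec : spectrum ℝ (Stin V + t • lapMat A) ⊆ Set.Icc a c) (Y : Fin n → ℝ) (r : ℕ) :
    ‖WithLp.toLp 2 ((1 - c⁻¹ • (Stin V + t • lapMat A)) ^ r *ᵥ (c⁻¹ • (Stin V *ᵥ Y)))‖ ≤
      (1 - a / c) ^ r * ‖Y‖ / (c * √V.card) := by
  set B := Stin V + t • lapMat A with hBdef
  have hB : B.IsHermitian :=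
    Matrix.isHermitian_iff_isSymm.2 ((isSymm_Stin V).add ((isSymm_lapMat hA).smul t))
  have hone : (1 : Fin n → ℝ) ⬝ᵥ (B *ᵥ 1) = 1 := by
    rw [hBdef, Matrix.add_mulVec, Matrix.smul_mulVec, lapMat_mulVec_one, smul_zero, add_zero,
      one_dotProduct_Stin_mulVec_one hV]
  have hc : 0 < c :=
    pos_of_spectrum_subset_Iic hB (hspec.trans Set.Icc_subset_Iic_self) (hone ▸ one_pos)
  have hac : a ≤ c :=
    Set.nonempty_Icc.1 ⟨_, hspec (hB.eigenvalues_mem_spectrum_real hV.choose)⟩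
  have hν : 0 ≤ 1 - a / c := sub_nonneg.2 ((div_le_one hc).2 hac)
  rw [Matrix.mulVec_smul, WithLp.toLp_smul, norm_smul, Real.norm_of_nonneg (by positivity)]
  calc c⁻¹ * ‖WithLp.toLp 2 ((1 - c⁻¹ • B) ^ r *ᵥ (Stin V *ᵥ Y))‖
      ≤ c⁻¹ * ((1 - a / c) ^ r * ‖WithLp.toLp 2 (Stin V *ᵥ Y)‖) := by
        gcongr
        exact norm_toLp_one_sub_inv_smul_pow_mulVec_le hB hc hac hspec r _
    _ ≤ c⁻¹ * ((1 - a / c) ^ r * (‖Y‖ / √V.card)) := by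
        gcongr
        exact norm_toLp_Stin_mulVec_le V Y
    _ = (1 - a / c) ^ r * ‖Y‖ / (c * √V.card) := by field_simp

end Graph

theorem neumann_term_norm_bound
    {n : ℕ} (G : SimpleGraph (Fin n)) (A : Matrix (Fin n) (Fin n) ℝ)
    (hconn : G.Connected)
    (hsupp : ∀ u v, ¬ G.Adj u v → A u v = 0)
    (hpos : ∀ u v, G.Adj u v → 0 < A u v)
    (hsymm : A.IsSymm)
    (m : ℕ) (hmeq : m = G.edgeSet.ncard) (hm : 0 < m)
    (Vtr : Finset (Fin n)) (hVtr : Vtr.Nonempty)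
    (lam : ℝ) (hlam : 0 < lam)
    (μmin μmax : ℝ)
    (hmin_mem : ∃ x : Fin n → ℝ, x ≠ 0 ∧ (Bmat Vtr lam m A).mulVec x = μmin • x)
    (hmin_le : ∀ (μ : ℝ) (x : Fin n → ℝ), x ≠ 0 →
      (Bmat Vtr lam m A).mulVec x = μ • x → μmin ≤ μ)
    (hmax_mem : ∃ x : Fin n → ℝ, x ≠ 0 ∧ (Bmat Vtr lam m A).mulVec x = μmax • x)
    (hmax_ge : ∀ (μ : ℝ) (x : Fin n → ℝ), x ≠ 0 →
      (Bmat Vtr lam m A).mulVec x = μ • x → μ ≤ μmax)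
    (Yobs : Fin n → ℝ) :
    ∀ r : ℕ,
      Real.sqrt (∑ a, (Tvec Vtr lam m A μmax Yobs r a) ^ 2) ≤
        (1 - μmin / μmax) ^ r * ‖Yobs‖ / (μmax * Real.sqrt (Vtr.card : ℝ)) := by
  intro r
  have hspec : spectrum ℝ (Bmat Vtr lam m A) ⊆ Set.Icc μmin μmax := fun μ hμ ↦
    let ⟨x, hx, hBx⟩ := mem_spectrum_iff_exists_mulVec_eq_smul.1 hμ
    ⟨hmin_le μ x hx hBx, hmax_ge μ x hx hBx⟩
  simpa only [Tvec, Bmat, EuclideanSpace.norm_eq, Real.norm_eq_abs, sq_abs] using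
    neumann_term_norm_bound_general hsymm hVtr hspec Yobs r
end

section
/- Assume G is connected, let Y_obs ∈ ℝ^n, y_∞ = ‖Y_obs‖_∞, let V_out ⊆ {1,…,n} be nonempty with diagonal 0/1 selection matrix S_out, let μ_min be the smallest eigenvalue of B, and Y(A) = B^{-1} S̃_in Y_obs. Then ‖S_out (Y(A) − Y_obs)‖ ≤ ((1 + μ_min √(|V_tr| |V_out|)) / (μ_min √|V_tr|)) y_∞ in Euclidean norm. -/
/-! STATEMENT 16: `‖S_out (Y(A) - Y_obs)‖ ≤ ((1 + μmin √(|V_tr| |V_out|)) / (μmin √|V_tr|)) y_∞`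
in Euclidean norm, where `Y(A) = B⁻¹ S̃_in Y_obs`. -/

open scoped BigOperators Matrix

/-!
Each half of `B` is positive semidefinite. If the quadratic form of `B` vanishes at `x`, the
Dirichlet form of the Laplacian makes `x` constant on every connected component, and the training
part makes it vanish on `V_tr`; as `V_tr` meets every component, `B` is positive definite and
`μ_min > 0`. Expanding in an orthonormal eigenbasis gives `‖B⁻¹‖ ≤ 1 / μ_min`, and since a
restriction to `V` has Euclidean norm at most `√|V| ‖y‖_∞`, the triangle inequality bounds the
residual by `‖S̃_in Y_obs‖ / μ_min + ‖S_out Y_obs‖ ≤ (1 / (μ_min √|V_tr|) + √|V_out|) y_∞`.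
-/

open Matrix WithLp

section Hermitian

variable {𝕜 ι : Type*} [RCLike 𝕜] [Fintype ι] {B : Matrix ι ι 𝕜} {μ : ℝ}

open scoped ComplexOrder in
lemma pos_of_posDef_of_mulVec_eq_smul (hB : B.PosDef) {x : ι → 𝕜} (hx : x ≠ 0)
    (hBx : B *ᵥ x = μ • x) : 0 < μ := by
  have hform := hB.dotProduct_mulVec_pos hx
  rw [hBx, dotProduct_smul, RCLike.real_smul_eq_coe_mul] at hform
  exact RCLike.ofReal_pos.1 (pos_of_mul_pos_left hform (dotProduct_star_self_nonneg x))

variable [DecidableEq ι]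

lemma inner_eigenvectorBasis_mulVec (hB : B.IsHermitian) (i : ι) (x : ι → 𝕜) :
    inner 𝕜 (hB.eigenvectorBasis i) (toLp 2 (B *ᵥ x)) =
      hB.eigenvalues i * inner 𝕜 (hB.eigenvectorBasis i) (toLp 2 x) := by
  have hstar : star (hB.eigenvectorBasis i).ofLp ᵥ* B =
      (hB.eigenvalues i : 𝕜) • star (hB.eigenvectorBasis i).ofLp := by
    rw [← congrArg (vecMul _) hB.eq, ← star_mulVec, hB.mulVec_eigenvectorBasis, star_smul,
      star_trivial, RCLike.real_smul_eq_coe_smul (K := 𝕜)]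
  simp only [EuclideanSpace.inner_eq_star_dotProduct, dotProduct_comm _ (star _)]
  rw [dotProduct_mulVec, hstar, smul_dotProduct, smul_eq_mul]

lemma mul_norm_le_norm_mulVec_of_le_abs_eigenvalues (hB : B.IsHermitian)
    (hμ : ∀ i, μ ≤ |hB.eigenvalues i|) (x : ι → 𝕜) : μ * ‖toLp 2 x‖ ≤ ‖toLp 2 (B *ᵥ x)‖ := by
  obtain hneg | hnonneg := le_total μ 0
  · exact (mul_nonpos_of_nonpos_of_nonneg hneg (norm_nonneg _)).trans (norm_nonneg _)
  refine le_of_sq_le_sq ?_ (norm_nonneg _)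
  rw [mul_pow, ← hB.eigenvectorBasis.sum_sq_norm_inner_right (toLp 2 x),
    ← hB.eigenvectorBasis.sum_sq_norm_inner_right (toLp 2 (B *ᵥ x)), Finset.mul_sum]
  gcongr with i
  rw [inner_eigenvectorBasis_mulVec, norm_mul, RCLike.norm_ofReal, mul_pow]
  gcongr
  exact hμ i

lemma norm_inv_mulVec_le_of_le_abs_eigenvalues (hB : B.IsHermitian) (hpos : 0 < μ)
    (hμ : ∀ i, μ ≤ |hB.eigenvalues i|) (y : ι → 𝕜) :
    ‖toLp 2 (B⁻¹ *ᵥ y)‖ ≤ ‖toLp 2 y‖ / μ := by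
  have hdet : IsUnit B.det := by
    rw [isUnit_iff_ne_zero, hB.det_eq_prod_eigenvalues, Finset.prod_ne_zero_iff]
    exact fun i _ => RCLike.ofReal_ne_zero.2 (abs_pos.1 (hpos.trans_le (hμ i)))
  have hinv : B *ᵥ (B⁻¹ *ᵥ y) = y := by
    rw [mulVec_mulVec, mul_nonsing_inv B hdet, one_mulVec]
  rw [le_div_iff₀' hpos]
  simpa only [hinv] using mul_norm_le_norm_mulVec_of_le_abs_eigenvalues hB hμ (B⁻¹ *ᵥ y)

lemma le_eigenvalues_of_forall_mulVec_eq_smul (hB : B.IsHermitian)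
    (hμ : ∀ (ν : ℝ) (x : ι → 𝕜), x ≠ 0 → B *ᵥ x = ν • x → μ ≤ ν) (i : ι) :
    μ ≤ hB.eigenvalues i :=
  hμ _ _ ((ofLp_eq_zero 2).not.2 (hB.eigenvectorBasis.orthonormal.ne_zero i))
    (hB.mulVec_eigenvectorBasis i)

end Hermitian

section Selection

variable {n : ℕ} (V : Finset (Fin n)) (x : Fin n → ℝ)

lemma selMat_mulVec_apply (i : Fin n) : (selMat V *ᵥ x) i = if i ∈ V then x i else 0 := by
  simp only [selMat, mulVec_diagonal, ite_mul, one_mul, zero_mul]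

lemma norm_selMat_mulVec_sq : ‖toLp 2 (selMat V *ᵥ x)‖ ^ 2 = ∑ i ∈ V, x i ^ 2 := by
  simp only [EuclideanSpace.real_norm_sq_eq, selMat_mulVec_apply, ite_pow, ne_eq,
    OfNat.ofNat_ne_zero, not_false_eq_true, zero_pow, Finset.sum_ite_mem, Finset.univ_inter]

lemma norm_selMat_mulVec_le : ‖toLp 2 (selMat V *ᵥ x)‖ ≤ ‖toLp 2 x‖ := by
  refine le_of_sq_le_sq ?_ (norm_nonneg _)
  rw [norm_selMat_mulVec_sq, EuclideanSpace.real_norm_sq_eq]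
  exact Finset.sum_le_univ_sum_of_nonneg fun i => sq_nonneg (x i)

lemma norm_selMat_mulVec_le_sqrt_card_mul :
    ‖toLp 2 (selMat V *ᵥ x)‖ ≤ √(V.card : ℝ) * ‖x‖ := by
  refine le_of_sq_le_sq ?_ (by positivity)
  rw [norm_selMat_mulVec_sq, mul_pow, Real.sq_sqrt (Nat.cast_nonneg _), ← nsmul_eq_mul]
  refine Finset.sum_le_card_nsmul _ _ _ fun i _ => ?_
  exact sq_le_sq.2 ((norm_le_pi_norm x i).trans (le_abs_self _))

lemma norm_Stin_mulVec_le : ‖toLp 2 (Stin V *ᵥ x)‖ ≤ ‖x‖ / √(V.card : ℝ) :=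
  calc ‖toLp 2 (Stin V *ᵥ x)‖
      = (V.card : ℝ)⁻¹ * ‖toLp 2 (selMat V *ᵥ x)‖ := by
        rw [Stin, smul_mulVec, toLp_smul, norm_smul, norm_inv, Real.norm_natCast]
    _ ≤ (V.card : ℝ)⁻¹ * (√(V.card : ℝ) * ‖x‖) := by
        gcongr
        exact norm_selMat_mulVec_le_sqrt_card_mul V x
    _ = ‖x‖ / √(V.card : ℝ) := by
        rw [← mul_assoc, inv_mul_eq_div, Real.sqrt_div_self, inv_mul_eq_div]

lemma posSemidef_Stin : (Stin V).PosSemidef := by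
  refine PosSemidef.smul (.diagonal fun i => ?_) (by positivity)
  dsimp only [Pi.zero_apply]
  split_ifs <;> norm_num

variable {V x}

lemma apply_eq_zero_of_Stin_mulVec_eq_zero (hx : Stin V *ᵥ x = 0) {i : Fin n} (hi : i ∈ V) :
    x i = 0 := by
  have hcard : (V.card : ℝ) ≠ 0 := Nat.cast_ne_zero.2 (Finset.card_ne_zero_of_mem hi)
  have hxi := congrFun hx i
  rw [Stin, smul_mulVec, Pi.smul_apply, selMat_mulVec_apply, if_pos hi] at hxi
  exact (smul_eq_zero.1 hxi).resolve_left (inv_ne_zero hcard)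

end Selection

section Laplacian

variable {n : ℕ} {A : Matrix (Fin n) (Fin n) ℝ} {x : Fin n → ℝ}

lemma isHermitian_lapMat (hsymm : A.IsSymm) : (lapMat A).IsHermitian :=
  (isHermitian_diagonal _).sub (by rwa [IsHermitian, conjTranspose_eq_transpose_of_trivial])

lemma dotProduct_lapMat_mulVec (hsymm : A.IsSymm) (x : Fin n → ℝ) :
    x ⬝ᵥ lapMat A *ᵥ x = (∑ u, ∑ v, A u v * (x u - x v) ^ 2) / 2 := by
  have hform : x ⬝ᵥ lapMat A *ᵥ x = ∑ u, ∑ v, A u v * (x u ^ 2 - x u * x v) := by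
    simp only [lapMat, sub_mulVec, dotProduct, Pi.sub_apply, mulVec_diagonal]
    simp only [mulVec, dotProduct, Finset.sum_mul, ← Finset.sum_sub_distrib, Finset.mul_sum]
    exact Finset.sum_congr rfl fun u _ => Finset.sum_congr rfl fun v _ => by ring
  have hswap : x ⬝ᵥ lapMat A *ᵥ x = ∑ u, ∑ v, A u v * (x v ^ 2 - x u * x v) := by
    rw [hform, Finset.sum_comm]
    exact Finset.sum_congr rfl fun u _ => Finset.sum_congr rfl fun v _ => by
      rw [hsymm.apply u v, mul_comm (x v)]
  rw [eq_div_iff two_ne_zero, mul_two]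
  nth_rw 1 [hform]
  simp only [hswap, ← Finset.sum_add_distrib]
  exact Finset.sum_congr rfl fun u _ => Finset.sum_congr rfl fun v _ => by ring

lemma posSemidef_lapMat (hsymm : A.IsSymm) (hnonneg : ∀ u v, 0 ≤ A u v) :
    (lapMat A).PosSemidef := by
  refine .of_dotProduct_mulVec_nonneg (isHermitian_lapMat hsymm) fun x => ?_
  rw [star_trivial, dotProduct_lapMat_mulVec hsymm]
  have hterm (u v : Fin n) : 0 ≤ A u v * (x u - x v) ^ 2 :=
    mul_nonneg (hnonneg u v) (sq_nonneg _)
  exact div_nonneg (Fintype.sum_nonneg fun u => Fintype.sum_nonneg (hterm u)) two_pos.le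

lemma apply_eq_of_lapMat_mulVec_eq_zero (hsymm : A.IsSymm) (hnonneg : ∀ u v, 0 ≤ A u v)
    (hx : lapMat A *ᵥ x = 0) {u v : Fin n} (huv : A u v ≠ 0) : x u = x v := by
  have hterm (u v : Fin n) : 0 ≤ A u v * (x u - x v) ^ 2 :=
    mul_nonneg (hnonneg u v) (sq_nonneg _)
  have hsum : ∑ u, ∑ v, A u v * (x u - x v) ^ 2 = 0 := by
    have hform := dotProduct_lapMat_mulVec hsymm x
    rw [hx, dotProduct_zero] at hform
    linarith
  have hrow := congrFun
    ((Fintype.sum_eq_zero_iff_of_nonneg fun u => Fintype.sum_nonneg (hterm u)).1 hsum) u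
  have hentry := congrFun ((Fintype.sum_eq_zero_iff_of_nonneg (hterm u)).1 hrow) v
  exact sub_eq_zero.1 (pow_eq_zero_iff two_ne_zero |>.1 ((mul_eq_zero.1 hentry).resolve_left huv))

lemma apply_eq_of_lapMat_mulVec_eq_zero_of_reachable {G : SimpleGraph (Fin n)}
    (hsymm : A.IsSymm) (hnonneg : ∀ u v, 0 ≤ A u v) (hadj : ∀ u v, G.Adj u v → A u v ≠ 0)
    (hx : lapMat A *ᵥ x = 0) {u v : Fin n} (huv : G.Reachable u v) : x u = x v := by
  obtain ⟨p⟩ := huv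
  induction p with
  | nil => rfl
  | cons h _ ih =>
    exact (apply_eq_of_lapMat_mulVec_eq_zero hsymm hnonneg hx (hadj _ _ h)).trans ih

end Laplacian

section Residual

variable {n : ℕ}

lemma posDef_Bmat {G : SimpleGraph (Fin n)} {A : Matrix (Fin n) (Fin n) ℝ}
    {Vtr : Finset (Fin n)} {lam : ℝ} {m : ℕ} (hsymm : A.IsSymm) (hnonneg : ∀ u v, 0 ≤ A u v)
    (hadj : ∀ u v, G.Adj u v → A u v ≠ 0) (hreach : ∀ v, ∃ u ∈ Vtr, G.Reachable u v)
    (hlam : 0 < lam) (hm : 0 < m) : (Bmat Vtr lam m A).PosDef := by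
  have hc : 0 < lam / m := by positivity
  have hS := posSemidef_Stin Vtr
  have hL := posSemidef_lapMat hsymm hnonneg
  have hB : (Bmat Vtr lam m A).PosSemidef := hS.add (hL.smul hc.le)
  refine .of_dotProduct_mulVec_pos hB.isHermitian fun x hx => ?_
  refine (hB.dotProduct_mulVec_nonneg x).lt_of_ne' fun hzero => hx (funext fun v => ?_)
  rw [Bmat, add_mulVec, dotProduct_add, smul_mulVec, dotProduct_smul,
    add_eq_zero_iff_of_nonneg (hS.dotProduct_mulVec_nonneg x)
      (smul_nonneg hc.le (hL.dotProduct_mulVec_nonneg x)), smul_eq_zero_iff_right hc.ne',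
    hS.dotProduct_mulVec_zero_iff, hL.dotProduct_mulVec_zero_iff] at hzero
  obtain ⟨hSx, hLx⟩ := hzero
  obtain ⟨u, hu, huv⟩ := hreach v
  have hconst := apply_eq_of_lapMat_mulVec_eq_zero_of_reachable hsymm hnonneg hadj hLx huv
  exact hconst.symm.trans (apply_eq_zero_of_Stin_mulVec_eq_zero hSx hu)

lemma norm_selMat_mulVec_residual_le {B : Matrix (Fin n) (Fin n) ℝ} {μ : ℝ}
    (hB : B.IsHermitian) (hpos : 0 < μ) (hμ : ∀ i, μ ≤ |hB.eigenvalues i|)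
    (Vtr Vout : Finset (Fin n)) (y : Fin n → ℝ) :
    ‖toLp 2 (selMat Vout *ᵥ (B⁻¹ *ᵥ (Stin Vtr *ᵥ y) - y))‖ ≤
      ‖y‖ / √(Vtr.card : ℝ) / μ + √(Vout.card : ℝ) * ‖y‖ := by
  have hprediction : ‖toLp 2 (selMat Vout *ᵥ (B⁻¹ *ᵥ (Stin Vtr *ᵥ y)))‖ ≤
      ‖y‖ / √(Vtr.card : ℝ) / μ := by
    refine (norm_selMat_mulVec_le _ _).trans
      ((norm_inv_mulVec_le_of_le_abs_eigenvalues hB hpos hμ _).trans ?_)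
    gcongr
    exact norm_Stin_mulVec_le Vtr y
  rw [mulVec_sub, toLp_sub]
  exact (norm_sub_le _ _).trans
    (add_le_add hprediction (norm_selMat_mulVec_le_sqrt_card_mul Vout y))

end Residual

theorem outer_residual_norm_bound_general
    {n : ℕ} (G : SimpleGraph (Fin n)) (A : Matrix (Fin n) (Fin n) ℝ)
    (hsupp : ∀ u v, ¬ G.Adj u v → A u v = 0)
    (hpos : ∀ u v, G.Adj u v → 0 < A u v)
    (hsymm : A.IsSymm)
    (hm : 0 < G.edgeSet.ncard)
    (Vtr : Finset (Fin n)) (hreach : ∀ v, ∃ u ∈ Vtr, G.Reachable u v)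
    (lam : ℝ) (hlam : 0 < lam)
    (μmin : ℝ)
    (hmin_mem : ∃ x : Fin n → ℝ, x ≠ 0 ∧ Bmat Vtr lam G.edgeSet.ncard A *ᵥ x = μmin • x)
    (hmin_le : ∀ (μ : ℝ) (x : Fin n → ℝ), x ≠ 0 →
      Bmat Vtr lam G.edgeSet.ncard A *ᵥ x = μ • x → μmin ≤ μ)
    (Vout : Finset (Fin n)) (Yobs : Fin n → ℝ) :
    √(∑ a, ((selMat Vout *ᵥ
        ((Bmat Vtr lam G.edgeSet.ncard A)⁻¹ *ᵥ (Stin Vtr *ᵥ Yobs) - Yobs)) a) ^ 2) ≤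
      (1 + μmin * √((Vtr.card : ℝ) * (Vout.card : ℝ))) / (μmin * √(Vtr.card : ℝ)) * ‖Yobs‖ := by
  have hnonneg (u v : Fin n) : 0 ≤ A u v := by
    by_cases huv : G.Adj u v
    exacts [(hpos u v huv).le, (hsupp u v huv).ge]
  have hB := posDef_Bmat hsymm hnonneg (fun u v huv => (hpos u v huv).ne') hreach hlam hm
  obtain ⟨x, hx, hBx⟩ := hmin_mem
  have hμpos : 0 < μmin := pos_of_posDef_of_mulVec_eq_smul hB hx hBx
  have hμ (i : Fin n) : μmin ≤ |hB.isHermitian.eigenvalues i| :=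
    (le_eigenvalues_of_forall_mulVec_eq_smul hB.isHermitian hmin_le i).trans (le_abs_self _)
  have hcard : (0 : ℝ) < Vtr.card := by
    obtain ⟨v, -⟩ := Function.ne_iff.1 hx
    obtain ⟨u, hu, -⟩ := hreach v
    exact_mod_cast Finset.card_pos.2 ⟨u, hu⟩
  have hbound := norm_selMat_mulVec_residual_le hB.isHermitian hμpos hμ Vtr Vout Yobs
  rw [EuclideanSpace.norm_eq] at hbound
  simp only [Real.norm_eq_abs, sq_abs] at hbound
  refine hbound.trans_eq ?_
  rw [Real.sqrt_mul hcard.le]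
  field_simp

theorem outer_residual_norm_bound
    {n : ℕ} (G : SimpleGraph (Fin n)) (A : Matrix (Fin n) (Fin n) ℝ)
    (hconn : G.Connected)
    (hsupp : ∀ u v, ¬ G.Adj u v → A u v = 0)
    (hpos : ∀ u v, G.Adj u v → 0 < A u v)
    (hsymm : A.IsSymm)
    (m : ℕ) (hmeq : m = G.edgeSet.ncard) (hm : 0 < m)
    (Vtr : Finset (Fin n)) (hVtr : Vtr.Nonempty)
    (lam : ℝ) (hlam : 0 < lam)
    (μmin : ℝ)
    (hmin_mem : ∃ x : Fin n → ℝ, x ≠ 0 ∧ (Bmat Vtr lam m A).mulVec x = μmin • x)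
    (hmin_le : ∀ (μ : ℝ) (x : Fin n → ℝ), x ≠ 0 →
      (Bmat Vtr lam m A).mulVec x = μ • x → μmin ≤ μ)
    (Vout : Finset (Fin n)) (hVout : Vout.Nonempty)
    (Yobs : Fin n → ℝ) :
    Real.sqrt (∑ a, (((selMat Vout).mulVec
        ((Bmat Vtr lam m A)⁻¹.mulVec ((Stin Vtr).mulVec Yobs) - Yobs)) a) ^ 2) ≤
      (1 + μmin * Real.sqrt ((Vtr.card : ℝ) * (Vout.card : ℝ))) /
        (μmin * Real.sqrt (Vtr.card : ℝ)) * ‖Yobs‖ := by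
  subst hmeq
  exact outer_residual_norm_bound_general G A hsupp hpos hsymm hm Vtr
    (fun v => hVtr.imp fun u hu => ⟨hu, hconn.preconnected u v⟩) lam hlam μmin hmin_mem hmin_le
    Vout Yobs
end
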